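/- arXiv:1708.03403 — 2 statements merged into one kernel-verified Lean document; each statement's English description precedes it below -/
import Mathlib

section
/- For every n ≥ 2, Ec_qo ∪ {e_funⁿ} ⊭_SLO e_depthⁿ: there is a (finite) SLO validating every member of Ec_qo ∪ {e_funⁿ} that does not validate e_depthⁿ. (Since every frame validating Ec_qo ∪ {e_funⁿ} validates e_depthⁿ, this shows the unimodal spi-logic axiomatised by Ec_qo ∪ {e_funⁿ} is not complete.) -/
/-- Strictly positive modal formulas over a signature `Sig`:
propositional variables, `⊤`, conjunction, and a diamond `◇_r` for each `r : Sig`. -/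
inductive SP (Sig : Type) : Type
  | var : ℕ → SP Sig
  | top : SP Sig
  | and : SP Sig → SP Sig → SP Sig
  | dia : Sig → SP Sig → SP Sig

/-- An sp-implication `σ → τ` is a pair of sp-formulas. -/
abbrev SPImp (Sig : Type) := SP Sig × SP Sig

/-- A SLO of signature `Sig`: a meet-semilattice with a greatest element,
equipped with a monotone unary operator for each element of the signature. -/
structure SLO (Sig : Type) where
  carrier : Type
  [instInf : SemilatticeInf carrier]
  [instTop : OrderTop carrier]
  dia : Sig → carrier → carrier
  mono : ∀ r : Sig, Monotone (dia r)

attribute [instance] SLO.instInf SLO.instTop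

namespace SLO

variable {Sig : Type}

/-- Evaluation of an sp-formula in a SLO under a valuation of the variables. -/
def eval (A : SLO Sig) (v : ℕ → A.carrier) : SP Sig → A.carrier
  | .var n => v n
  | .top => ⊤
  | .and φ ψ => eval A v φ ⊓ eval A v ψ
  | .dia r φ => A.dia r (eval A v φ)

/-- A SLO validates an sp-implication `σ → τ` if under every valuation
the value of `σ` is below the value of `τ`. -/
def Valid (A : SLO Sig) (ι : SPImp Sig) : Prop :=
  ∀ v : ℕ → A.carrier, eval A v ι.1 ≤ eval A v ι.2

/-- A SLO validates a set of sp-implications. -/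
def ValidSet (A : SLO Sig) (Ax : Set (SPImp Sig)) : Prop :=
  ∀ ι ∈ Ax, Valid A ι

end SLO

/-- A Kripke frame: a nonempty type of worlds with a binary accessibility
relation for each element of the signature. -/
structure KFrame (Sig : Type) where
  world : Type
  [instNonempty : Nonempty world]
  rel : Sig → world → world → Prop

attribute [instance] KFrame.instNonempty

namespace KFrame

variable {Sig : Type}

/-- Truth of an sp-formula at a world of a Kripke model `(F, v)`. -/
def truth (F : KFrame Sig) (v : ℕ → Set F.world) : SP Sig → F.world → Prop
  | .var n, w => w ∈ v n
  | .top, _ => True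
  | .and φ ψ, w => truth F v φ w ∧ truth F v ψ w
  | .dia r φ, w => ∃ u, F.rel r w u ∧ truth F v φ u

/-- A frame validates an sp-implication `σ → τ` if in every Kripke model on it,
at every world, truth of `σ` implies truth of `τ`. -/
def Valid (F : KFrame Sig) (ι : SPImp Sig) : Prop :=
  ∀ (v : ℕ → Set F.world) (w : F.world), truth F v ι.1 w → truth F v ι.2 w

/-- A frame validates a set of sp-implications. -/
def ValidSet (F : KFrame Sig) (Ax : Set (SPImp Sig)) : Prop :=
  ∀ ι ∈ Ax, Valid F ι

/-- The complex algebra `F*` of a frame, as a SLO: all subsets of the worlds,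
with intersection as meet, the whole set as `⊤`, and
`◇_r X = {w | ∃ u ∈ X, rel r w u}`. -/
def cmpl (F : KFrame Sig) : SLO Sig where
  carrier := Set F.world
  dia r X := {w | ∃ u ∈ X, F.rel r w u}
  mono r := by
    intro X Y hXY w hw
    obtain ⟨u, hu, hr⟩ := hw
    exact ⟨u, hXY hu, hr⟩

end KFrame

/-- An sp-embedding between SLOs: an injective map preserving `⊤`,
binary meets, and each operator. -/
def IsSpEmbedding {Sig : Type} (A B : SLO Sig) (η : A.carrier → B.carrier) : Prop :=
  Function.Injective η ∧ η ⊤ = ⊤ ∧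
    (∀ a b : A.carrier, η (a ⊓ b) = η a ⊓ η b) ∧
    ∀ (r : Sig) (a : A.carrier), η (A.dia r a) = B.dia r (η a)

/-- `Ax ⊨_Kr ι`: every frame validating every member of `Ax` validates `ι`. -/
def KrCons {Sig : Type} (Ax : Set (SPImp Sig)) (ι : SPImp Sig) : Prop :=
  ∀ F : KFrame Sig, F.ValidSet Ax → F.Valid ι

/-- `Ax ⊨_SLO ι`: every SLO validating every member of `Ax` validates `ι`. -/
def SLOCons {Sig : Type} (Ax : Set (SPImp Sig)) (ι : SPImp Sig) : Prop :=
  ∀ A : SLO Sig, A.ValidSet Ax → A.Valid ι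

/-- The spi-logic axiomatised by `Ax` is complete:
`Ax ⊨_Kr ι` iff `Ax ⊨_SLO ι` for every sp-implication `ι`. -/
def IsCompleteLogic {Sig : Type} (Ax : Set (SPImp Sig)) : Prop :=
  ∀ ι : SPImp Sig, KrCons Ax ι ↔ SLOCons Ax ι

/-- The spi-logic axiomatised by `Ax` is complex: every SLO validating every
member of `Ax` sp-embeds into the complex algebra of some frame validating
every member of `Ax`. -/
def IsComplexLogic {Sig : Type} (Ax : Set (SPImp Sig)) : Prop :=
  ∀ A : SLO Sig, A.ValidSet Ax →
    ∃ F : KFrame Sig, F.ValidSet Ax ∧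
      ∃ η : A.carrier → (KFrame.cmpl F).carrier, IsSpEmbedding A (KFrame.cmpl F) η

/-- The unimodal diamond. -/
def SP.d (φ : SP Unit) : SP Unit := SP.dia () φ

/-- `p → ◇p` (reflexivity). -/
def e_refl : SPImp Unit := (SP.var 0, (SP.var 0).d)

/-- `◇◇p → ◇p` (transitivity). -/
def e_trans : SPImp Unit := (((SP.var 0).d).d, (SP.var 0).d)

/-- `q ∧ ◇p → ◇(p ∧ ◇q)` (symmetry). -/
def e_sym : SPImp Unit :=
  ((SP.var 1).and ((SP.var 0).d), ((SP.var 0).and ((SP.var 1).d)).d)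

/-- Conjunction of a list of variables (with a final `⊤`). -/
def conjVarsList : List ℕ → SP Unit
  | [] => SP.top
  | n :: L => (SP.var n).and (conjVarsList L)

/-- The conjunction `⋀ Q` of a finite set of variables. -/
def conjVars (Q : Finset ℕ) : SP Unit := conjVarsList (Q.sort (· ≤ ·))

/-- Conjunction of a list of sp-formulas (with a final `⊤`). -/
def conjSP : List (SP Unit) → SP Unit
  | [] => SP.top
  | φ :: L => φ.and (conjSP L)

/-- `e_funⁿ`: the sp-implication
`⋀_{Q ⊆ {p₀,…,pₙ}, |Q| = n} ◇(⋀ Q) → ◇(p₀ ∧ ⋯ ∧ pₙ)`. -/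
noncomputable def eFun (n : ℕ) : SPImp Unit :=
  (conjSP ((((Finset.range (n + 1)).powersetCard n).toList).map fun Q => (conjVars Q).d),
   (conjVars (Finset.range (n + 1))).d)

/-- `depthPair k = (σ_k, τ_k)` for `k ≥ 1`, where `σ₁ = ◇p`, `τ₁ = ◇q`,
`σ_k = ◇(p ∧ τ_{k-1})` and `τ_k = ◇(q ∧ σ_{k-1})` (with `p = var 0`, `q = var 1`). -/
def depthPair : ℕ → SP Unit × SP Unit
  | 0 => (SP.top, SP.top)
  | 1 => ((SP.var 0).d, (SP.var 1).d)
  | k + 2 => (((SP.var 0).and (depthPair (k + 1)).2).d,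
              ((SP.var 1).and (depthPair (k + 1)).1).d)

/-- `e_depthⁿ`: the sp-implication `p ∧ τₙ → τ_{n+1}`. -/
def eDepth (n : ℕ) : SPImp Unit :=
  ((SP.var 0).and (depthPair n).2, (depthPair (n + 1)).2)

theorem truth_conjVarsList (F : KFrame Unit) (v : ℕ → Set F.world) (w : F.world) (L : List ℕ) :
    F.truth v (conjVarsList L) w ↔ ∀ i ∈ L, w ∈ v i := by
  induction L with
  | nil => simp [conjVarsList, KFrame.truth]
  | cons a L ih => simp [conjVarsList, KFrame.truth, ih]

theorem truth_conjVars (F : KFrame Unit) (v : ℕ → Set F.world) (w : F.world) (Q : Finset ℕ) :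
    F.truth v (conjVars Q) w ↔ ∀ i ∈ Q, w ∈ v i := by
  simp [conjVars, truth_conjVarsList]

theorem truth_conjSP (F : KFrame Unit) (v : ℕ → Set F.world) (w : F.world) (L : List (SP Unit)) :
    F.truth v (conjSP L) w ↔ ∀ φ ∈ L, F.truth v φ w := by
  induction L with
  | nil => simp [conjSP, KFrame.truth]
  | cons a L ih => simp [conjSP, KFrame.truth, ih]

theorem truth_eFun1 (F : KFrame Unit) (v : ℕ → Set F.world) (w : F.world) (n : ℕ) :
    F.truth v (eFun n).1 w ↔
      ∀ k ≤ n, ∃ u, F.rel () w u ∧ ∀ i ≤ n, i ≠ k → u ∈ v i := by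
  simp only [eFun, truth_conjSP, List.mem_map, Finset.mem_toList, Finset.mem_powersetCard]
  constructor
  · intro h k hk
    obtain ⟨u, hu, h2⟩ := h _ ⟨(Finset.range (n+1)).erase k, ⟨Finset.erase_subset _ _, by
      rw [Finset.card_erase_of_mem (by simp; omega)]; simp⟩, rfl⟩
    refine ⟨u, hu, fun i hi hik => ?_⟩
    exact (truth_conjVars F v u _).1 h2 i (by simp; omega)
  · rintro h φ ⟨Q, ⟨hQ, hc⟩, rfl⟩
    obtain ⟨k, hk, hkQ⟩ : ∃ k ∈ Finset.range (n+1), k ∉ Q := by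
      by_contra! hcon
      have := Finset.card_le_card (show Finset.range (n+1) ⊆ Q from hcon)
      simp at this; omega
    obtain ⟨u, hu, h2⟩ := h k (by simp at hk; omega)
    refine ⟨u, hu, (truth_conjVars F v u _).2 fun i hi => h2 i ?_ ?_⟩
    · have := hQ hi; simp at this; omega
    · rintro rfl; exact hkQ hi

theorem truth_eFun2 (F : KFrame Unit) (v : ℕ → Set F.world) (w : F.world) (n : ℕ) :
    F.truth v (eFun n).2 w ↔ ∃ u, F.rel () w u ∧ ∀ i ≤ n, u ∈ v i := by
  simp [eFun, SP.d, KFrame.truth, truth_conjVars]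

/-- Alternating chains. -/
def AltChain (F : KFrame Unit) (v : ℕ → Set F.world) (s k : ℕ) (f : ℕ → F.world) : Prop :=
  ∀ i < k, F.rel () (f i) (f (i+1)) ∧ f (i+1) ∈ v ((i+s) % 2)

theorem altChain_succ (F : KFrame Unit) (v : ℕ → Set F.world) (w : F.world) (s k : ℕ) :
    (∃ f, f 0 = w ∧ AltChain F v s (k+1) f) ↔
    ∃ u, F.rel () w u ∧ u ∈ v (s % 2) ∧ ∃ f, f 0 = u ∧ AltChain F v (s+1) k f := by
  constructor
  · rintro ⟨f, rfl, hf⟩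
    have h0 := hf 0 (by omega)
    refine ⟨f 1, h0.1, by simpa using h0.2, fun i => f (i+1), rfl, fun i hi => ?_⟩
    have := hf (i+1) (by omega)
    rwa [show i + 1 + s = i + (s+1) by omega] at this
  · rintro ⟨u, hu, hv, f, rfl, hf⟩
    refine ⟨fun i => match i with | 0 => w | i+1 => f i, rfl, fun i hi => ?_⟩
    cases i with
    | zero => exact ⟨hu, by simpa using hv⟩
    | succ i =>
      have := hf i (by omega)
      rwa [show i + (s+1) = i + 1 + s by omega] at this

theorem altChain_mod (F : KFrame Unit) (v : ℕ → Set F.world) (s k : ℕ) (f : ℕ → F.world) :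
    AltChain F v (s+2) k f ↔ AltChain F v s k f := by
  unfold AltChain
  simp [← Nat.add_assoc]

theorem truth_depth (F : KFrame Unit) (v : ℕ → Set F.world) (k : ℕ) : ∀ w : F.world,
    (F.truth v (depthPair k).1 w ↔ ∃ f, f 0 = w ∧ AltChain F v 0 k f) ∧
    (F.truth v (depthPair k).2 w ↔ ∃ f, f 0 = w ∧ AltChain F v 1 k f) := by
  induction k with
  | zero =>
    intro w
    simp only [depthPair, KFrame.truth, true_iff]
    exact ⟨⟨fun _ => w, rfl, fun i hi => by omega⟩, ⟨fun _ => w, rfl, fun i hi => by omega⟩⟩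
  | succ k ih =>
    intro w
    rw [altChain_succ, altChain_succ]
    simp only [Nat.reduceAdd, altChain_mod F v 0, ← (ih _).1, ← (ih _).2]
    cases k with
    | zero => simp [depthPair, SP.d, KFrame.truth]
    | succ k => simp [depthPair, SP.d, KFrame.truth]

theorem kr_part (n : ℕ) :
    KrCons ({e_refl, e_trans, eFun n} : Set (SPImp Unit)) (eDepth n) := by
  intro F hF v w hw
  have hrefl : ∀ x, F.rel () x x := by
    intro x
    obtain ⟨u, hu, h2⟩ := hF e_refl (by simp) (fun _ => {x}) x rfl
    have h2 : u = x := h2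
    exact h2 ▸ hu
  have htrans : ∀ x y z, F.rel () x y → F.rel () y z → F.rel () x z := by
    intro x y z hxy hyz
    obtain ⟨u, hu, h2⟩ := hF e_trans (by simp) (fun _ => {z}) x ⟨y, hxy, z, hyz, rfl⟩
    have h2 : u = z := h2
    exact h2 ▸ hu
  obtain ⟨hw0, hw1⟩ := hw
  have hw0 : w ∈ v 0 := hw0
  obtain ⟨f, hf0, hf⟩ := ((truth_depth F v n w).2).1 hw1
  have hlab : ∀ i ≤ n, f i ∈ v (i % 2) := by
    intro i hi
    cases i with
    | zero => rw [hf0]; exact hw0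
    | succ i => exact (hf i (by omega)).2
  have hrel : ∀ i ≤ n, F.rel () w (f i) := by
    intro i
    induction i with
    | zero => intro _; rw [hf0]; exact hrefl w
    | succ i ih => intro hi; exact htrans _ _ _ (ih (by omega)) (hf i (by omega)).1
  have hcol : ∃ i j, i < j ∧ j ≤ n ∧ f i = f j := by
    by_contra! hcon
    have h := hF (eFun n) (by simp) (fun j => {x | ∃ i ≤ n, i ≠ j ∧ f i = x}) w
      ((truth_eFun1 _ _ _ _).2 fun k hk => ⟨f k, hrel k hk, fun i hi hik =>
        ⟨k, hk, fun h => hik h.symm, rfl⟩⟩)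
    obtain ⟨u, -, hu⟩ := (truth_eFun2 _ _ _ _).1 h
    obtain ⟨i, hi, -, rfl⟩ := hu 0 (by omega)
    obtain ⟨j, hj, hji, he⟩ := hu i hi
    rcases lt_or_gt_of_ne hji with h | h
    · exact hcon j i h hi he
    · exact hcon i j h hj he.symm
  obtain ⟨i, j, hij, hj, he⟩ := hcol
  refine ((truth_depth F v (n+1) w).2).2 ?_
  by_cases hpar : (j - i) % 2 = 0
  · refine ⟨fun t => if t ≤ j then f t else f (t - (j - i)), by simp [hf0], fun t ht => ?_⟩
    rcases lt_trichotomy t j with h | h | h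
    · simp only [show t ≤ j by omega, show t + 1 ≤ j by omega, if_true]
      exact hf t (by omega)
    · subst h
      simp only [le_refl, show ¬ (t + 1 ≤ t) by omega, if_true, if_false]
      have := hf i (by omega)
      rw [show t + 1 - (t - i) = i + 1 by omega, ← he, show (t+1) % 2 = (i+1) % 2 by omega]
      exact this
    · simp only [show ¬ t ≤ j by omega, show ¬ (t + 1 ≤ j) by omega, if_false]
      have := hf (t - (j - i)) (by omega)
      rw [show t + 1 - (j - i) = t - (j-i) + 1 by omega,
        show (t+1) % 2 = (t - (j-i)+1) % 2 by omega]
      exact this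
  · refine ⟨fun t => if t ≤ i then f t else f i, by simp [hf0], fun t ht => ?_⟩
    by_cases h : t + 1 ≤ i
    · simp only [show t ≤ i by omega, h, if_true]
      exact hf t (by omega)
    · have h1 : (if t ≤ i then f t else f i) = f i := by
        split_ifs with h2
        · rw [show t = i by omega]
        · rfl
      simp only [h1, h, if_false]
      refine ⟨hrefl _, ?_⟩
      have a := hlab i (by omega)
      have b := hlab j hj
      rw [← he] at b
      by_cases hc : (t+1) % 2 = i % 2
      · rw [hc]; exact a
      · rw [show (t+1) % 2 = j % 2 by omega]; exact b

/-- The chain frame. -/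
def chainFrame (n : ℕ) : KFrame Unit where
  world := Fin (n+1)
  rel _ x y := x ≤ y

/-- Admissible sets. -/
def Adm (n : ℕ) (X : Set (Fin (n+1))) : Prop :=
  ∀ x ∈ X, ∀ y : Fin (n+1), y ≤ x → y.val % 2 = x.val % 2 → y ∈ X

/-- The algebra. -/
def chainSLO (n : ℕ) : SLO Unit where
  carrier := {X : Set (Fin (n+1)) // Adm n X}
  instInf := Subtype.semilatticeInf (P := Adm n) (fun {X Y} hX hY x hx y hy h =>
    ⟨hX x hx.1 y hy h, hY x hx.2 y hy h⟩)
  instTop := Subtype.orderTop (p := Adm n) (fun _ _ _ _ _ => trivial)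
  dia _ X := ⟨{w | ∃ u ∈ X.1, w ≤ u}, fun _ ⟨u, hu, hx⟩ _ hy _ => ⟨u, hu, hy.trans hx⟩⟩
  mono _ X Y hXY := by
    rintro w ⟨u, hu, hw⟩
    exact ⟨u, hXY hu, hw⟩

theorem eval_chain (n : ℕ) (v : ℕ → (chainSLO n).carrier) (φ : SP Unit) : ∀ x : Fin (n+1),
    x ∈ ((chainSLO n).eval v φ).1 ↔
      (chainFrame n).truth (fun i => (v i).1) φ x := by
  induction φ with
  | var i => intro x; exact Iff.rfl
  | top => intro x; exact iff_of_true trivial trivial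
  | and φ ψ h1 h2 => intro x; exact and_congr (h1 x) (h2 x)
  | dia r φ h =>
    intro x
    constructor
    · rintro ⟨u, hu, hx⟩; exact ⟨u, hx, (h u).1 hu⟩
    · rintro ⟨u, hx, hu⟩; exact ⟨u, (h u).2 hu, hx⟩

theorem chain_valid (n : ℕ) (ι : SPImp Unit) : (chainSLO n).Valid ι ↔
    ∀ v : ℕ → (chainSLO n).carrier, ∀ x : Fin (n+1),
      (chainFrame n).truth (fun i => (v i).1) ι.1 x →
      (chainFrame n).truth (fun i => (v i).1) ι.2 x := by
  constructor
  · intro h v x hx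
    exact (eval_chain n v _ x).1 (h v ((eval_chain n v _ x).2 hx))
  · intro h v x hx
    exact (eval_chain n v _ x).2 (h v x ((eval_chain n v _ x).1 hx))

theorem chain_fun (n : ℕ) (hn : 2 ≤ n) : (chainSLO n).Valid (eFun n) := by
  rw [chain_valid]
  intro v w hw
  replace hw := (truth_eFun1 _ _ _ _).1 hw
  refine (truth_eFun2 _ _ _ _).2 ?_
  have key : ∀ a b : ℕ, a ≠ b → ∀ x y : Fin (n+1), w ≤ x → x ≤ y → x.val % 2 = y.val % 2 →
      (∀ i ≤ n, i ≠ a → x ∈ (v i).1) → (∀ i ≤ n, i ≠ b → y ∈ (v i).1) →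
      ∃ u, (chainFrame n).rel () w u ∧ ∀ i ≤ n, u ∈ (v i).1 := by
    intro a b hab x y hwx hxy hp hx hy
    refine ⟨x, hwx, fun i hi => ?_⟩
    by_cases h : i = a
    · exact (v i).2 y (hy i hi (by omega)) x hxy hp
    · exact hx i hi h
  have key2 : ∀ a b : ℕ, a ≠ b → ∀ x y : Fin (n+1), w ≤ x → w ≤ y → x.val % 2 = y.val % 2 →
      (∀ i ≤ n, i ≠ a → x ∈ (v i).1) → (∀ i ≤ n, i ≠ b → y ∈ (v i).1) →
      ∃ u, (chainFrame n).rel () w u ∧ ∀ i ≤ n, u ∈ (v i).1 := by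
    intro a b hab x y hwx hwy hp hx hy
    rcases le_total x y with h | h
    · exact key a b hab x y hwx h hp hx hy
    · exact key b a hab.symm y x hwy h hp.symm hy hx
  obtain ⟨x, hx, hx'⟩ := hw 0 (by omega)
  obtain ⟨y, hy, hy'⟩ := hw 1 (by omega)
  obtain ⟨z, hz, hz'⟩ := hw 2 (by omega)
  change Fin (n+1) at x y z
  by_cases h1 : x.val % 2 = y.val % 2
  · exact key2 0 1 (by omega) x y hx hy h1 hx' hy'
  by_cases h2 : x.val % 2 = z.val % 2
  · exact key2 0 2 (by omega) x z hx hz h2 hx' hz'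
  · exact key2 1 2 (by omega) y z hy hz (by omega) hy' hz'

theorem chain_depth (n : ℕ) : ¬ (chainSLO n).Valid (eDepth n) := by
  rw [chain_valid]
  intro h
  have h1 := h (fun i => ⟨{x | x.val % 2 = i % 2}, fun x hx y _ hp => hp.trans hx⟩) 0
    ⟨rfl, ((truth_depth (chainFrame n) _ n _).2).2
      ⟨fun i => (⟨min i n, by omega⟩ : Fin (n+1)), Fin.ext (by simp), fun i hi => ⟨?_, ?_⟩⟩⟩
  · obtain ⟨f, hf0, hf⟩ := ((truth_depth (chainFrame n) _ (n+1) _).2).1 h1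
    change ℕ → Fin (n+1) at f
    have hb : ∀ i ≤ n + 1, i ≤ (f i).val ∧ (f i).val % 2 = i % 2 := by
      intro i
      induction i with
      | zero => intro _; rw [hf0]; simp
      | succ i ih =>
        intro hi
        obtain ⟨a, b⟩ := ih (by omega)
        obtain ⟨c, d⟩ := hf i (by omega)
        have c : (f i).val ≤ (f (i+1)).val := c
        have d : (f (i+1)).val % 2 = ((i+1) % 2) % 2 := d
        omega
    have := (hb (n+1) le_rfl).1
    have := (f (n+1)).isLt
    omega
  · show min i n ≤ min (i+1) n
    omega
  · show min (i+1) n % 2 = ((i+1) % 2) % 2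
    omega

theorem chain_set (n : ℕ) (hn : 2 ≤ n) :
    (chainSLO n).ValidSet ({e_refl, e_trans, eFun n} : Set (SPImp Unit)) := by
  rintro ι (rfl | rfl | rfl)
  · rw [chain_valid]
    intro v x hx
    exact ⟨x, le_refl (α := Fin (n+1)) x, hx⟩
  · rw [chain_valid]
    rintro v x ⟨y, hxy, z, hyz, hz⟩
    exact ⟨z, le_trans (α := Fin (n+1)) hxy hyz, hz⟩
  · exact chain_fun n hn

/-- For every `n ≥ 2`, `Ec_qo ∪ {e_funⁿ} ⊭_SLO e_depthⁿ`: there is a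
finite SLO validating every member of `Ec_qo ∪ {e_funⁿ}` that does not validate
`e_depthⁿ`. Since every frame validating `Ec_qo ∪ {e_funⁿ}` validates `e_depthⁿ`,
the spi-logic axiomatised by `Ec_qo ∪ {e_funⁿ}` is not complete. -/
theorem stmt18 (n : ℕ) (hn : 2 ≤ n) :
    (∃ A : SLO Unit, Finite A.carrier ∧
      A.ValidSet ({e_refl, e_trans, eFun n} : Set (SPImp Unit)) ∧
      ¬ A.Valid (eDepth n)) ∧
    ¬ SLOCons ({e_refl, e_trans, eFun n} : Set (SPImp Unit)) (eDepth n) ∧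
    KrCons ({e_refl, e_trans, eFun n} : Set (SPImp Unit)) (eDepth n) ∧
    ¬ IsCompleteLogic ({e_refl, e_trans, eFun n} : Set (SPImp Unit)) := by
  have hno : ¬ SLOCons ({e_refl, e_trans, eFun n} : Set (SPImp Unit)) (eDepth n) :=
    fun h => chain_depth n (h _ (chain_set n hn))
  refine ⟨⟨chainSLO n, ?_, chain_set n hn, chain_depth n⟩, hno, kr_part n, fun h => ?_⟩
  · show Finite {X : Set (Fin (n+1)) // Adm n X}
    infer_instance
  · exact hno ((h _).1 (kr_part n))
end

section
/- Neither the class of all weakly connected unimodal frames nor the class of all transitive and weakly connected unimodal frames is spi-definable: there is no set Σ of unimodal sp-implications such that the frames validating every member of Σ are exactly the weakly connected frames, and there is no such Σ whose validating frames are exactly the transitive weakly connected frames. -/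
/-- A class of unimodal frames is spi-definable if it consists exactly of the
frames validating every member of some set of sp-implications. -/
def SpiDefinable (C : KFrame Unit → Prop) : Prop :=
  ∃ Ax : Set (SPImp Unit), ∀ F : KFrame Unit, C F ↔ F.ValidSet Ax

/-- A binary relation is weakly connected. -/
def WeaklyConnected {W : Type} (R : W → W → Prop) : Prop :=
  ∀ x y z : W, R x y → R x z → R y z ∨ R z y ∨ y = z

/-- The fork frame. -/
def forkF : KFrame Unit := { world := Fin 3, rel := fun _ w u => w = 0 ∧ u ≠ 0 }
/-- The three-element strict chain. -/
def chainF : KFrame Unit := { world := Fin 3, rel := fun _ w u => w < u }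
/-- The two-element strict chain. -/
def shortF : KFrame Unit := { world := Bool, rel := fun _ w u => w = false ∧ u = true }

lemma truth_hom (F G : KFrame Unit) (f : F.world → G.world)
    (hf : ∀ a b, F.rel () a b → G.rel () (f a) (f b))
    (v : ℕ → Set F.world) (v' : ℕ → Set G.world) (hv : ∀ n a, a ∈ v n → f a ∈ v' n)
    (φ : SP Unit) : ∀ w, F.truth v φ w → G.truth v' φ (f w) := by
  induction φ with
  | var n => exact fun w h => hv n w h
  | top => exact fun w h => trivial
  | and a b iha ihb => exact fun w h => ⟨iha w h.1, ihb w h.2⟩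
  | dia r a ih =>
    rintro w ⟨u, hu, h⟩
    exact ⟨f u, hf _ _ hu, ih u h⟩

/-- The collapse of the fork. -/
def colF (w : Fin 3) : Bool := decide (w ≠ 0)

lemma truth_back (v : ℕ → Set (Fin 3)) (φ : SP Unit) : ∀ w : Fin 3,
    shortF.truth (fun _ => Set.univ) φ (colF w) → chainF.truth v φ w → forkF.truth v φ w := by
  induction φ with
  | var n => exact fun w _ h => h
  | top => exact fun w _ h => trivial
  | and a b iha ihb => exact fun w h k => ⟨iha w h.1 k.1, ihb w h.2 k.2⟩
  | dia r a ih =>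
    rintro w ⟨u, ⟨hw, hu⟩, h⟩ ⟨(t : Fin 3), ht, k⟩
    have hw0 : w = 0 := by simpa [colF] using hw
    have ht' : w < t := ht
    have ht0 : t ≠ 0 := by rw [hw0] at ht'; exact ht'.ne'
    refine ⟨t, ⟨hw0, ht0⟩, ih t ?_ k⟩
    have : colF t = u := by rw [hu]; simpa [colF] using ht0
    rw [this]; exact h

lemma fork_valid (ι : SPImp Unit) (h1 : chainF.Valid ι) (h2 : shortF.Valid ι) :
    forkF.Valid ι := by
  intro v w h
  refine truth_back v ι.2 w (h2 (fun _ => Set.univ) _ ?_) (h1 v w ?_)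
  · refine truth_hom forkF shortF colF ?_ v (fun _ => Set.univ) (fun _ _ _ => trivial) _ w h
    rintro a b ⟨ha, hb⟩
    exact ⟨by simpa [colF] using ha, by simpa [colF] using hb⟩
  · refine truth_hom forkF chainF id ?_ v v (fun _ _ h => h) _ w h
    rintro (a : Fin 3) (b : Fin 3) ⟨ha, hb⟩
    change a < b
    subst ha
    exact Fin.pos_iff_ne_zero.mpr hb

lemma fork_not : ¬ WeaklyConnected (forkF.rel ()) := by
  intro h
  have := h (0 : Fin 3) (1 : Fin 3) (2 : Fin 3) ⟨rfl, by decide⟩ ⟨rfl, by decide⟩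
  rcases this with h | h | h
  · exact absurd h.1 (by decide)
  · exact absurd h.1 (by decide)
  · exact absurd (show (1 : Fin 3) = 2 from h) (by decide)

lemma chain_wc : WeaklyConnected (chainF.rel ()) := by
  rintro x (y : Fin 3) (z : Fin 3) _ _
  rcases lt_trichotomy y z with h | h | h
  · exact Or.inl h
  · exact Or.inr (Or.inr h)
  · exact Or.inr (Or.inl h)

lemma short_wc : WeaklyConnected (shortF.rel ()) := by
  intro x y z h k
  exact Or.inr (Or.inr (h.2.trans k.2.symm))

lemma chain_tr : Transitive (chainF.rel ()) := fun a b c h k =>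
  @lt_trans (Fin 3) _ a b c h k

lemma short_tr : Transitive (shortF.rel ()) := fun _ _ _ h k => ⟨h.1, k.2⟩

/-- Neither the class of all weakly connected unimodal frames nor
the class of all transitive and weakly connected unimodal frames is spi-definable. -/
theorem stmt19 :
    ¬ SpiDefinable (fun F => WeaklyConnected (F.rel ())) ∧
    ¬ SpiDefinable (fun F => Transitive (F.rel ()) ∧ WeaklyConnected (F.rel ())) := by
  constructor
  · rintro ⟨Ax, h⟩
    exact fork_not ((h forkF).2 fun ι hι =>
      fork_valid ι ((h chainF).1 chain_wc ι hι) ((h shortF).1 short_wc ι hι))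
  · rintro ⟨Ax, h⟩
    exact fork_not ((h forkF).2 fun ι hι =>
      fork_valid ι ((h chainF).1 ⟨chain_tr, chain_wc⟩ ι hι)
        ((h shortF).1 ⟨short_tr, short_wc⟩ ι hι)).2
end
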